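/- The statistic inv3 is Mahonian: for every n ≥ 1, ∑_{σ ∈ S_n} t^{inv3(σ)} = [n]_t! in ℤ[t]. -/

import Mathlib

/-! The proof is by induction on `n`, deleting the last letter.  Every `σ ∈ S_{n+1}` arises from a
unique pair of a `τ ∈ S_n` and a last letter `l + 1`, `0 ≤ l ≤ n`, inserted at the end
(`insLast_bijective`).  The 3-inversions `(i, j)` with `j ≤ n` depend only on relative order, so
they number `inv3 τ` (`inv3_etaEnt`).  The 3-inversions `(i, n+1)` depend only on `l`, on the last
entry `a` of `τ` and on whether `τ` ends with an ascent, where `τ₀ = 0` (`card_lastPairs`).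
If it does, `l ≥ a` gives a double ascent and the counts `0, …, n - a`, while `l < a` gives a peak
and the counts `n - a + 1, …, n`; if it does not, `l < a` gives a double descent and the counts
`0, …, a - 1`, while `l ≥ a` gives a valley and the counts `a, …, n`.  In both cases each of
`0, …, n` occurs once (`sum_lastCount`), so inserting the letter multiplies the generating function
by `[n+1]_t`. -/

open Finset

namespace QEuler

/-! ### Entries of a permutation of `{1,…,n}`, with the convention `σ₀ = 0`.
A permutation `σ ∈ S_n` is represented by `Equiv.Perm (Fin n)`; its entry at
position `i ∈ {1,…,n}` is `(σ (i-1)).val + 1 ∈ {1,…,n}`, and all other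
positions (in particular position `0`) carry the value `0`. -/

def ent {n : ℕ} (σ : Equiv.Perm (Fin n)) (i : ℕ) : ℕ :=
  if h : 1 ≤ i ∧ i ≤ n then ((σ ⟨i - 1, by omega⟩ : Fin n) : ℕ) + 1 else 0

/-- Decorations: a set `D : Finset (Fin n)` records the decorated positions,
`j : Fin n` encoding position `j+1 ∈ {1,…,n}`.  `isDec D i` tells whether
position `i` is decorated (position `0` never is). -/
def isDec {n : ℕ} (D : Finset (Fin n)) (i : ℕ) : Bool :=
  if h : 1 ≤ i ∧ i ≤ n then decide ((⟨i - 1, by omega⟩ : Fin n) ∈ D) else false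

/-- Number of decorated positions among `{1,…,n}` for a decoration predicate. -/
def decCount (n : ℕ) (D : ℕ → Bool) : ℕ :=
  ((Finset.Icc 1 n).filter fun i => D i = true).card

/-! ### Major index and reverse major index -/

/-- Major index of the word `E 1, E 2, …, E n`. -/
def maj (n : ℕ) (E : ℕ → ℕ) : ℕ :=
  ∑ i ∈ Finset.Icc 1 (n - 1), if E (i + 1) < E i then i else 0

/-- Reverse major index: the major index of the reversed word `E n, …, E 1`. -/
def revmaj (n : ℕ) (E : ℕ → ℕ) : ℕ := maj n fun i => E (n + 1 - i)

/-! ### Decreasing runs and schedule numbers -/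

/-- The word is strictly decreasing along consecutive positions `p,…,q`. -/
def decOn (E : ℕ → ℕ) (p q : ℕ) : Prop := ∀ t ∈ Finset.Ico p q, E (t + 1) < E t

instance (E : ℕ → ℕ) (p q : ℕ) : Decidable (decOn E p q) := by
  unfold decOn; infer_instance

/-- Start of the maximal strictly decreasing consecutive run containing position `i`. -/
def runStart (E : ℕ → ℕ) (i : ℕ) : ℕ :=
  Nat.find (show ∃ p, decOn E p i from ⟨i, fun t ht => absurd ht (by simp)⟩)

/-- End of the maximal strictly decreasing consecutive run containing position `i`
(positions are `0,…,n`). -/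
def runEnd (n : ℕ) (E : ℕ → ℕ) (i : ℕ) : ℕ :=
  Nat.findGreatest (fun q => decOn E i q) n

/-- The schedule number of a decorated permutation (given by its entry word `E` on
positions `0,…,n`, with `E 0 = 0`, and decoration predicate `D`) at position `i`.
If `σ_i` is undecorated and lies in run `r_j` it counts the undecorated entries of `r_j`
larger than `σ_i` plus the undecorated entries of `r_{j-1}` smaller than `σ_i`;
if `σ_i` is decorated it counts the undecorated entries of `r_j` smaller than `σ_i`
plus the undecorated entries of `r_{j+1}` larger than `σ_i`. -/
def schedNum (n : ℕ) (E : ℕ → ℕ) (D : ℕ → Bool) (i : ℕ) : ℕ :=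
  if D i = true then
    ((Finset.Icc (runStart E i) (runEnd n E i)).filter fun t => D t = false ∧ E t < E i).card
      + (if runEnd n E i < n then
          ((Finset.Icc (runEnd n E i + 1) (runEnd n E (runEnd n E i + 1))).filter
            fun t => D t = false ∧ E i < E t).card
        else 0)
  else
    ((Finset.Icc (runStart E i) (runEnd n E i)).filter fun t => D t = false ∧ E i < E t).card
      + (if runStart E i = 0 then 0 else
          ((Finset.Icc (runStart E (runStart E i - 1)) (runStart E i - 1)).filter
            fun t => D t = false ∧ E t < E i).card)

/-! ### Cyclic runs -/

/-- `σ_i,…,σ_j` is a cyclic (decreasing) run: for some shift `k`, the residues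
`σ_t + k (mod n+1)` are strictly decreasing for `t = i,…,j`. -/
def IsCyclicRun (n : ℕ) (E : ℕ → ℕ) (i j : ℕ) : Prop :=
  i ≤ j ∧ j ≤ n ∧ ∃ k : ℕ, ∀ t ∈ Finset.Ico i j, (E (t + 1) + k) % (n + 1) < (E t + k) % (n + 1)

/-- A cyclic run which cannot be extended to the left. -/
def LeftMaximalRun (n : ℕ) (E : ℕ → ℕ) (i j : ℕ) : Prop :=
  IsCyclicRun n E i j ∧ (i = 0 ∨ ¬ IsCyclicRun n E (i - 1) j)

/-- A cyclic run which cannot be extended to the right. -/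
def RightMaximalRun (n : ℕ) (E : ℕ → ℕ) (i j : ℕ) : Prop :=
  IsCyclicRun n E i j ∧ (j = n ∨ ¬ IsCyclicRun n E i (j + 1))

/-! ### Double ascents, descents, peaks, valleys; `inv3` and `monot` -/

def DblAsc (E : ℕ → ℕ) (j : ℕ) : Prop := E (j - 2) < E (j - 1) ∧ E (j - 1) < E j
def DblDesc (E : ℕ → ℕ) (j : ℕ) : Prop := E (j - 1) < E (j - 2) ∧ E j < E (j - 1)
def IsPeak (E : ℕ → ℕ) (j : ℕ) : Prop := E (j - 2) < E (j - 1) ∧ E j < E (j - 1)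
def IsValley (E : ℕ → ℕ) (j : ℕ) : Prop := E (j - 1) < E (j - 2) ∧ E (j - 1) < E j

instance (E : ℕ → ℕ) (j : ℕ) : Decidable (DblAsc E j) := by unfold DblAsc; infer_instance
instance (E : ℕ → ℕ) (j : ℕ) : Decidable (DblDesc E j) := by unfold DblDesc; infer_instance
instance (E : ℕ → ℕ) (j : ℕ) : Decidable (IsPeak E j) := by unfold IsPeak; infer_instance
instance (E : ℕ → ℕ) (j : ℕ) : Decidable (IsValley E j) := by unfold IsValley; infer_instance

/-- `(i,j)` is a 3-inversion. -/
def Inv3Pair (E : ℕ → ℕ) (i j : ℕ) : Prop :=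
  (DblAsc E j ∧ E (j - 1) < E i ∧ E i < E j) ∨
  (DblDesc E j ∧ E j < E i ∧ E i < E (j - 1)) ∨
  (IsPeak E j ∧ E j < E i) ∨
  (IsValley E j ∧ E i < E j)

instance (E : ℕ → ℕ) (i j : ℕ) : Decidable (Inv3Pair E i j) := by
  unfold Inv3Pair; infer_instance

/-- Number of 3-inversions of the word `E 1, …, E n` (with the convention `E 0 = 0`). -/
def inv3 (n : ℕ) (E : ℕ → ℕ) : ℕ :=
  ((Finset.Icc 1 n ×ˢ Finset.Icc 1 n).filter fun p => p.1 < p.2 ∧ Inv3Pair E p.1 p.2).card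

/-- Number of double ascents and double descents. -/
def monot (n : ℕ) (E : ℕ → ℕ) : ℕ :=
  ((Finset.Icc 2 n).filter fun j => DblAsc E j ∨ DblDesc E j).card

/-! ### Alternating permutations, `31-2` patterns and Chebikin's statistic -/

/-- `σ₁ > σ₂ < σ₃ > ⋯`. -/
def IsAlternating (n : ℕ) (E : ℕ → ℕ) : Prop :=
  ∀ i ∈ Finset.Icc 1 (n - 1), if Odd i then E (i + 1) < E i else E i < E (i + 1)

instance (n : ℕ) (E : ℕ → ℕ) : Decidable (IsAlternating n E) := by
  unfold IsAlternating; infer_instance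

/-- The finset of alternating permutations of `{1,…,n}`. -/
def altPerms (n : ℕ) : Finset (Equiv.Perm (Fin n)) :=
  Finset.univ.filter fun σ => IsAlternating n (ent σ)

/-- Number of `31-2` patterns: pairs `(i,j)` with `i+1 < j ≤ n` and `σ_j > σ_i > σ_{i+1}`. -/
def pat312 (n : ℕ) (E : ℕ → ℕ) : ℕ :=
  ((Finset.Icc 1 n ×ˢ Finset.Icc 1 n).filter fun p =>
    p.1 + 1 < p.2 ∧ E (p.1 + 1) < E p.1 ∧ E p.1 < E p.2).card

/-- Chebikin's alternating inversion statistic `î`. -/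
def chebi (n : ℕ) (E : ℕ → ℕ) : ℕ :=
  ∑ i ∈ Finset.Icc 1 (n - 1),
    ((Finset.Icc (i + 1) n).filter fun j => if Odd i then E j < E i else E i < E j).card

/-! ### Insertion `η_l`, structural attribute `ã`, the shift `k + τ` and `δ_k` -/

/-- The entry word of the insertion `η_l(σ) ∈ S_{n+1}` of the value `l` at the end of `σ ∈ S_n`. -/
def etaEnt (n l : ℕ) (E : ℕ → ℕ) (i : ℕ) : ℕ :=
  if i = n + 1 then l
  else if 1 ≤ i ∧ i ≤ n then (if l ≤ E i then E i + 1 else E i) else 0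

/-- Structural attribute `ã(σ)` of `σ ∈ S_n`. -/
def atil (n : ℕ) (E : ℕ → ℕ) : ℕ :=
  if E (n - 1) < E n then n + 1 - E n else E n

/-- The entry word of `k + τ ∈ S_{n+1}` for `τ ∈ S_n`:
`σ₀ = 0` and `σ_{i+1}` is the representative of `k + τ_i (mod n+1)` in `{1,…,n+1}`. -/
def shiftEnt (n k : ℕ) (E : ℕ → ℕ) (i : ℕ) : ℕ :=
  if i = 0 then 0
  else if (k + E (i - 1)) % (n + 1) = 0 then n + 1 else (k + E (i - 1)) % (n + 1)

/-- Position of the first (leftmost, among `1,…,n`) undecorated letter;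
equals `n+1` if every position is decorated. -/
def firstUndecPos (n : ℕ) (D : ℕ → Bool) : ℕ :=
  Nat.find (show ∃ i, n < i ∨ (1 ≤ i ∧ D i = false) from ⟨n + 1, Or.inl (by omega)⟩)

/-- `a(τ)`: the value of the first undecorated letter of `τ`. -/
def aVal (n : ℕ) (E : ℕ → ℕ) (D : ℕ → Bool) : ℕ := E (firstUndecPos n D)

/-- Decorations of the `k`-th descendant `δ_k(τ)`: position `1` is decorated iff
`k > n+1-a(τ)`, and for `i ≥ 2` position `i` is decorated iff position `i-1` of `τ` is. -/
def deltaDec (n k : ℕ) (D : ℕ → Bool) (aval : ℕ) (i : ℕ) : Bool :=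
  if i = 0 then false
  else if i = 1 then decide (n + 1 - aval < k)
  else D (i - 1)

/-! ### Valley-decorated standardly labelled Dyck paths

A path of size `n` is encoded by its area word `a : Fin n → Fin n`
(`a i` = number of whole squares between the `(i+1)`-st north step and the diagonal;
a word `a₁ ⋯ a_n` is the area word of a Dyck path iff `a₁ = 0` and `a_i ≤ a_{i-1} + 1`),
its labelling `w : Equiv.Perm (Fin n)`, and its decoration set `dv : Finset (Fin n)`
(`j` encoding the position `j+1`). -/

abbrev PathData (n : ℕ) := (Fin n → Fin n) × Equiv.Perm (Fin n) × Finset (Fin n)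

/-- The area word, on positions `1,…,n`. -/
def aw {n : ℕ} (P : PathData n) (i : ℕ) : ℕ :=
  if h : 1 ≤ i ∧ i ≤ n then ((P.1 ⟨i - 1, by omega⟩ : Fin n) : ℕ) else 0

/-- The labels, on positions `1,…,n`. -/
def lbl {n : ℕ} (P : PathData n) (i : ℕ) : ℕ := ent P.2.1 i

/-- Whether the `i`-th north step is decorated. -/
def pdec {n : ℕ} (P : PathData n) (i : ℕ) : Bool := isDec P.2.2 i

/-- The `i`-th north step is a contractible valley: `a_{i-1} > a_i`, or
`a_{i-1} = a_i` and `w_{i-1} < w_i`. -/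
def ContractibleValley {n : ℕ} (P : PathData n) (i : ℕ) : Prop :=
  2 ≤ i ∧ i ≤ n ∧ (aw P i < aw P (i - 1) ∨ (aw P (i - 1) = aw P i ∧ lbl P (i - 1) < lbl P i))

instance {n : ℕ} (P : PathData n) (i : ℕ) : Decidable (ContractibleValley P i) := by
  unfold ContractibleValley; infer_instance

/-- `P` encodes a genuine valley-decorated standardly labelled Dyck path:
the area word is valid, labels in a common column increase from bottom to top
(equivalently, consecutive north steps carry increasing labels), and every
decoration sits on a contractible valley. -/
def IsValidPath {n : ℕ} (P : PathData n) : Prop :=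
  (1 ≤ n → aw P 1 = 0) ∧
  (∀ i ∈ Finset.Icc 2 n, aw P i ≤ aw P (i - 1) + 1) ∧
  (∀ i ∈ Finset.Icc 2 n, aw P i = aw P (i - 1) + 1 → lbl P (i - 1) < lbl P i) ∧
  (∀ i ∈ Finset.Icc 1 n, pdec P i = true → ContractibleValley P i)

instance {n : ℕ} (P : PathData n) : Decidable (IsValidPath P) := by
  unfold IsValidPath; infer_instance

/-- The finset `stLD(n)^{•k}` of valley-decorated standardly labelled Dyck paths
of size `n` with exactly `k` decorated (contractible) valleys. -/
def stLD (n k : ℕ) : Finset (PathData n) :=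
  Finset.univ.filter fun P => IsValidPath P ∧ P.2.2.card = k

/-- The area statistic. -/
def area {n : ℕ} (P : PathData n) : ℕ := ∑ i ∈ Finset.Icc 1 n, aw P i

/-- `(i,j)` is a primary diagonal inversion. -/
def PrimaryDinv {n : ℕ} (P : PathData n) (i j : ℕ) : Prop :=
  aw P i = aw P j ∧ lbl P i < lbl P j ∧ pdec P i = false

/-- `(i,j)` is a secondary diagonal inversion. -/
def SecondaryDinv {n : ℕ} (P : PathData n) (i j : ℕ) : Prop :=
  aw P i = aw P j + 1 ∧ lbl P j < lbl P i ∧ pdec P i = false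

instance {n : ℕ} (P : PathData n) (i j : ℕ) : Decidable (PrimaryDinv P i j) := by
  unfold PrimaryDinv; infer_instance
instance {n : ℕ} (P : PathData n) (i j : ℕ) : Decidable (SecondaryDinv P i j) := by
  unfold SecondaryDinv; infer_instance

/-- The set of diagonal-inversion pairs `(i,j)`, `1 ≤ i < j ≤ n`. -/
def dinvPairs {n : ℕ} (P : PathData n) : Finset (ℕ × ℕ) :=
  (Finset.Icc 1 n ×ˢ Finset.Icc 1 n).filter fun p =>
    p.1 < p.2 ∧ (PrimaryDinv P p.1 p.2 ∨ SecondaryDinv P p.1 p.2)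

/-- `dinv(P)`: number of primary and secondary diagonal inversions minus the
number of decorated valleys (a nonnegative quantity). -/
def dinv {n : ℕ} (P : PathData n) : ℕ := (dinvPairs P).card - P.2.2.card

/-! ### The diagonal word of a path -/

/-- Position in the diagonal word of the label of the `i`-th north step:
labels are listed diagonal by diagonal, and within a diagonal in decreasing order. -/
def dwPos {n : ℕ} (P : PathData n) (i : ℕ) : ℕ :=
  ((Finset.Icc 1 n).filter fun i' =>
    aw P i' < aw P i ∨ (aw P i' = aw P i ∧ lbl P i ≤ lbl P i')).card

/-- The `j`-th letter of the diagonal word `dw(P)`. -/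
def dwEnt {n : ℕ} (P : PathData n) (j : ℕ) : ℕ :=
  ∑ i ∈ (Finset.Icc 1 n).filter (fun i => dwPos P i = j), lbl P i

/-- Whether the `j`-th letter of the diagonal word is decorated. -/
def dwDec {n : ℕ} (P : PathData n) (j : ℕ) : Bool :=
  decide (((Finset.Icc 1 n).filter fun i => dwPos P i = j ∧ pdec P i = true).Nonempty)

end QEuler

namespace QEuler

/-- All schedule numbers of the decorated permutation equal `1`. -/
def HasSchedOne (n : ℕ) (E : ℕ → ℕ) (D : ℕ → Bool) : Prop :=
  ∀ i ∈ Finset.Icc 1 n, schedNum n E D i = 1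

instance (n : ℕ) (E : ℕ → ℕ) (D : ℕ → Bool) : Decidable (HasSchedOne n E D) := by
  unfold HasSchedOne; infer_instance

/-- The diagonal word of `P` is the decorated permutation `(σ, D)`. -/
def DwEq {n : ℕ} (P : PathData n) (σ : Equiv.Perm (Fin n)) (D : Finset (Fin n)) : Prop :=
  (∀ j ∈ Finset.Icc 1 n, dwEnt P j = ent σ j) ∧ ∀ j ∈ Finset.Icc 1 n, dwDec P j = isDec D j

instance {n : ℕ} (P : PathData n) (σ : Equiv.Perm (Fin n)) (D : Finset (Fin n)) :
    Decidable (DwEq P σ D) := by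
  unfold DwEq; infer_instance

end QEuler

namespace QEuler

/-! ### Appending a last letter to a permutation -/

/-- The permutation `η_{l+1}(τ)`: the word of `τ` with its entries `> l` (1-based) raised by one,
followed by the letter `l + 1`. -/
def insLast {n : ℕ} (l : Fin (n + 1)) (τ : Equiv.Perm (Fin n)) : Equiv.Perm (Fin (n + 1)) :=
  ((finSuccEquiv' (Fin.last n)).trans (Equiv.optionCongr τ)).trans (finSuccEquiv' l).symm

lemma insLast_last {n : ℕ} (l : Fin (n + 1)) (τ : Equiv.Perm (Fin n)) :
    insLast l τ (Fin.last n) = l := by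
  simp [insLast]

lemma insLast_castSucc {n : ℕ} (l : Fin (n + 1)) (τ : Equiv.Perm (Fin n)) (i : Fin n) :
    insLast l τ i.castSucc = l.succAbove (τ i) := by
  simp only [insLast, Equiv.trans_apply]
  rw [← Fin.succAbove_last_apply, finSuccEquiv'_succAbove]
  simp

lemma insLast_bijective (n : ℕ) :
    Function.Bijective fun p : Fin (n + 1) × Equiv.Perm (Fin n) => insLast p.1 p.2 := by
  rw [Fintype.bijective_iff_injective_and_card]
  constructor
  · rintro ⟨l, τ⟩ ⟨l', τ'⟩ h
    have h : insLast l τ = insLast l' τ' := h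
    have hl : l = l' := by
      rw [← insLast_last l τ, h, insLast_last]
    subst hl
    have hτ : τ = τ' := by
      ext i
      have := congrArg (fun σ => σ i.castSucc) h
      simp only [insLast_castSucc, Fin.succAbove_right_inj] at this
      rw [this]
    rw [hτ]
  · simp [Fintype.card_perm, Nat.factorial_succ]

lemma ent_insLast {n : ℕ} (l : Fin (n + 1)) (τ : Equiv.Perm (Fin n)) (i : ℕ) :
    ent (insLast l τ) i = etaEnt n (l + 1) (ent τ) i := by
  unfold etaEnt
  split_ifs with h1 h2 h3
  · subst h1
    rw [ent, dif_pos ⟨by omega, le_rfl⟩]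
    exact congrArg (fun x : Fin (n + 1) => (x : ℕ) + 1) (insLast_last l τ)
  all_goals first
    | (have hc : (⟨i - 1, by omega⟩ : Fin (n + 1)) = (⟨i - 1, by omega⟩ : Fin n).castSucc := rfl
       have hi : 1 ≤ i ∧ i ≤ n + 1 := by omega
       simp only [ent, dif_pos h2, dif_pos hi] at h3 ⊢
       rw [hc, insLast_castSucc]
       simp only [Fin.succAbove, Fin.lt_def, Fin.val_castSucc]
       split_ifs <;> simp_all <;> omega)
    | (have : ¬ (1 ≤ i ∧ i ≤ n + 1) := by omega
       simp [ent, this])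

lemma ent_mem {n : ℕ} (σ : Equiv.Perm (Fin n)) {i : ℕ} (hi : i ∈ Icc 1 n) :
    ent σ i ∈ Icc 1 n := by
  rw [Finset.mem_Icc] at hi
  rw [ent, dif_pos hi, Finset.mem_Icc]
  omega

lemma ent_injOn {n : ℕ} (σ : Equiv.Perm (Fin n)) : Set.InjOn (ent σ) (Icc 1 n : Finset ℕ) := by
  intro i hi j hj h
  rw [Finset.mem_coe, Finset.mem_Icc] at hi hj
  rw [ent, ent, dif_pos hi, dif_pos hj, Nat.add_right_cancel_iff, ← Fin.ext_iff,
    σ.injective.eq_iff, Fin.mk.injEq] at h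
  omega

/-- The first `n` letters of `σ ∈ S_{n+1}` are all values except the last letter. -/
lemma image_ent_init {n : ℕ} (σ : Equiv.Perm (Fin (n + 1))) :
    (Icc 1 n).image (ent σ) = (Icc 1 (n + 1)).erase (ent σ (n + 1)) := by
  have hsub : Icc 1 n ⊆ Icc 1 (n + 1) := Finset.Icc_subset_Icc_right (by omega)
  apply Finset.eq_of_subset_of_card_le
  · intro v hv
    obtain ⟨i, hi, rfl⟩ := Finset.mem_image.1 hv
    refine Finset.mem_erase.2 ⟨fun h => ?_, ent_mem σ (hsub hi)⟩
    have := ent_injOn σ (Finset.mem_coe.2 (hsub hi)) (by simp) h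
    simp at hi
    omega
  · rw [Finset.card_image_of_injOn ((ent_injOn σ).mono (by exact_mod_cast hsub)),
      Finset.card_erase_of_mem (ent_mem σ (by simp))]
    simp

/-- Counting earlier positions by a property of their letters amounts to counting values
other than the last letter. -/
lemma card_filter_ent {n : ℕ} (σ : Equiv.Perm (Fin (n + 1))) (P : ℕ → Prop) [DecidablePred P] :
    ((Icc 1 n).filter fun i => P (ent σ i)).card
      = (((Icc 1 (n + 1)).erase (ent σ (n + 1))).filter P).card := by
  rw [← image_ent_init, Finset.filter_image, Finset.card_image_of_injOn]
  refine (ent_injOn σ).mono fun i hi => ?_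
  simp at hi ⊢
  omega

/-! ### The 3-inversions of the extended word -/

lemma inv3_succ (n : ℕ) (E : ℕ → ℕ) :
    inv3 (n + 1) E = inv3 n E + ((Icc 1 n).filter fun i => Inv3Pair E i (n + 1)).card := by
  have h : ((Icc 1 (n + 1) ×ˢ Icc 1 (n + 1)).filter fun p => p.1 < p.2 ∧ Inv3Pair E p.1 p.2)
      = ((Icc 1 n ×ˢ Icc 1 n).filter fun p => p.1 < p.2 ∧ Inv3Pair E p.1 p.2)
        ∪ ((Icc 1 n).filter fun i => Inv3Pair E i (n + 1)).image fun i => (i, n + 1) := by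
    ext ⟨i, j⟩
    simp only [mem_filter, mem_product, mem_Icc, mem_union, mem_image, Prod.mk.injEq]
    constructor
    · rintro ⟨⟨hi, hj⟩, hij, hp⟩
      rcases Nat.lt_or_ge n j with h | h
      · obtain rfl : j = n + 1 := by omega
        exact Or.inr ⟨i, ⟨⟨by omega, by omega⟩, hp⟩, rfl, rfl⟩
      · exact Or.inl ⟨⟨⟨by omega, by omega⟩, by omega, h⟩, hij, hp⟩
    · rintro (⟨⟨hi, hj⟩, hij, hp⟩ | ⟨i', ⟨hi, hp⟩, rfl, rfl⟩)
      · exact ⟨⟨by omega, by omega⟩, hij, hp⟩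
      · exact ⟨⟨by omega, by omega⟩, by omega, hp⟩
  rw [inv3, h, Finset.card_union_of_disjoint, Finset.card_image_of_injective, inv3]
  · intro i j h
    simpa using h
  · rw [Finset.disjoint_left]
    rintro ⟨i, j⟩ h1 h2
    simp only [mem_filter, mem_product, mem_Icc, mem_image, Prod.mk.injEq] at h1 h2
    obtain ⟨_, _, _, rfl⟩ := h2
    omega

/-- Only the relative order of the entries `E 0, …, E n` matters, and inserting a last letter
preserves it. -/
lemma inv3_etaEnt (n l : ℕ) (E : ℕ → ℕ) (h0 : E 0 = 0) :
    inv3 n (etaEnt n (l + 1) E) = inv3 n E := by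
  have hlt : ∀ i ≤ n, ∀ j ≤ n,
      (etaEnt n (l + 1) E i < etaEnt n (l + 1) E j ↔ E i < E j) := by
    intro i hi j hj
    have key : ∀ i ≤ n, etaEnt n (l + 1) E i = if l + 1 ≤ E i then E i + 1 else E i := by
      intro i hi
      rcases Nat.eq_zero_or_pos i with rfl | hpos
      · simp [etaEnt, h0]
      · have h1 : i ≠ n + 1 := by omega
        have h2 : 1 ≤ i ∧ i ≤ n := ⟨hpos, hi⟩
        simp [etaEnt, h1, h2]
    rw [key i hi, key j hj]
    split_ifs <;> omega
  unfold inv3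
  congr 1
  apply Finset.filter_congr
  rintro ⟨i, j⟩ h
  simp only [mem_product, mem_Icc] at h
  simp only [Inv3Pair, DblAsc, DblDesc, IsPeak, IsValley]
  rw [hlt _ (by omega : j - 2 ≤ n) _ (by omega : j - 1 ≤ n),
    hlt _ (by omega : j - 1 ≤ n) _ (by omega : j ≤ n),
    hlt _ (by omega : j - 1 ≤ n) _ (by omega : i ≤ n),
    hlt _ (by omega : i ≤ n) _ (by omega : j ≤ n),
    hlt _ (by omega : j - 1 ≤ n) _ (by omega : j - 2 ≤ n),
    hlt _ (by omega : j ≤ n) _ (by omega : j - 1 ≤ n),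
    hlt _ (by omega : j ≤ n) _ (by omega : i ≤ n),
    hlt _ (by omega : i ≤ n) _ (by omega : j - 1 ≤ n)]

/-- The number of 3-inversions `(i, n+1)` created by appending the letter `l + 1` to a word of
`S_n` with last entry `a`, where `asc` tells whether that word ends with an ascent.  The four
values correspond to a double ascent, a peak, a double descent and a valley. -/
def lastCount (n a : ℕ) (asc : Prop) [Decidable asc] (l : ℕ) : ℕ :=
  if asc then (if a ≤ l then l - a else n - l) else (if l < a then a - 1 - l else l)

lemma card_lastPairs {n : ℕ} (hn : 1 ≤ n) (l : Fin (n + 1)) (τ : Equiv.Perm (Fin n)) :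
    ((Icc 1 n).filter fun i => Inv3Pair (ent (insLast l τ)) i (n + 1)).card
      = lastCount n (ent τ n) (ent τ (n - 1) < ent τ n) l := by
  have hl := l.isLt
  have ha := ent_mem τ (i := n) (by simp [hn])
  -- the last two entries of `τ` differ, also when `n = 1`, where the first of them is `ent τ 0 = 0`
  have hb : ent τ (n - 1) ≠ ent τ n := by
    rcases Nat.lt_or_ge 1 n with h | h
    · intro he
      have := ent_injOn τ (x₁ := n - 1) (x₂ := n) (by simp; omega) (by simp; omega) he
      omega
    · obtain rfl : n = 1 := by omega
      simp [ent]
  have hz : n - 1 = 0 → ent τ (n - 1) = 0 := by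
    intro h; simp [ent, h]
  have e1 : ent (insLast l τ) (n + 1) = l + 1 := by
    rw [ent_insLast]; simp [etaEnt]
  have e2 : ent (insLast l τ) n = if (l : ℕ) + 1 ≤ ent τ n then ent τ n + 1 else ent τ n := by
    rw [ent_insLast]; simp [etaEnt, hn]
  have e3 : ent (insLast l τ) (n - 1)
      = if (l : ℕ) + 1 ≤ ent τ (n - 1) then ent τ (n - 1) + 1 else ent τ (n - 1) := by
    rw [ent_insLast]
    unfold etaEnt
    split_ifs <;> omega
  have s1 : n + 1 - 1 = n := rfl
  have s2 : n + 1 - 2 = n - 1 := by omega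
  simp only [Inv3Pair, DblAsc, DblDesc, IsPeak, IsValley, s1, s2]
  rw [card_filter_ent (insLast l τ) (fun v =>
    ((ent (insLast l τ) (n - 1) < ent (insLast l τ) n
        ∧ ent (insLast l τ) n < ent (insLast l τ) (n + 1))
      ∧ ent (insLast l τ) n < v ∧ v < ent (insLast l τ) (n + 1)) ∨
    ((ent (insLast l τ) n < ent (insLast l τ) (n - 1)
        ∧ ent (insLast l τ) (n + 1) < ent (insLast l τ) n)
      ∧ ent (insLast l τ) (n + 1) < v ∧ v < ent (insLast l τ) n) ∨
    ((ent (insLast l τ) (n - 1) < ent (insLast l τ) n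
        ∧ ent (insLast l τ) (n + 1) < ent (insLast l τ) n) ∧ ent (insLast l τ) (n + 1) < v) ∨
    ((ent (insLast l τ) n < ent (insLast l τ) (n - 1)
        ∧ ent (insLast l τ) n < ent (insLast l τ) (n + 1)) ∧ v < ent (insLast l τ) (n + 1)))]
  rw [e1, e2, e3]
  generalize ent τ n = a at *
  generalize ent τ (n - 1) = b at *
  generalize (l : ℕ) = m at *
  rw [mem_Icc] at ha
  unfold lastCount
  split_ifs with h1 h2 h3 h4 h5 h6 h7
  all_goals first
    | omega
    | (trans (Ioo a (m + 1)).card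
       · congr 1; ext v; simp only [mem_filter, mem_erase, mem_Icc, mem_Ioo]; omega
       · rw [Nat.card_Ioo]; omega)
    | (trans (Ioc (m + 1) (n + 1)).card
       · congr 1; ext v; simp only [mem_filter, mem_erase, mem_Icc, mem_Ioc]; omega
       · rw [Nat.card_Ioc]; omega)
    | (trans (Ioo (m + 1) (a + 1)).card
       · congr 1; ext v; simp only [mem_filter, mem_erase, mem_Icc, mem_Ioo]; omega
       · rw [Nat.card_Ioo]; omega)
    | (trans (Ico 1 (m + 1)).card
       · congr 1; ext v; simp only [mem_filter, mem_erase, mem_Icc, mem_Ico]; omega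
       · rw [Nat.card_Ico]; omega)

/-! ### Summation over the last letter -/

/-- For fixed `τ`, the number of new 3-inversions is a permutation of `{0,…,n}` as a function of
the inserted letter. -/
lemma sum_lastCount (n a : ℕ) (ha : a ≤ n) (asc : Prop) [Decidable asc] :
    ∑ l : Fin (n + 1), (Polynomial.X : Polynomial ℤ) ^ lastCount n a asc l
      = ∑ i ∈ range (n + 1), (Polynomial.X : Polynomial ℤ) ^ i := by
  rw [Fin.sum_univ_eq_sum_range
    (fun l => (Polynomial.X : Polynomial ℤ) ^ lastCount n a asc l) (n + 1)]
  have hmaps : Set.MapsTo (lastCount n a asc) (range (n + 1)) (range (n + 1)) := by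
    intro l hl
    simp only [coe_range, Set.mem_Iio] at hl ⊢
    unfold lastCount
    split_ifs <;> omega
  have hinj : Set.InjOn (lastCount n a asc) (range (n + 1)) := by
    intro l hl m hm h
    simp only [coe_range, Set.mem_Iio] at hl hm
    unfold lastCount at h
    split_ifs at h <;> omega
  exact Finset.sum_nbij (lastCount n a asc) hmaps hinj
    (Finset.surjOn_of_injOn_of_card_le _ hmaps hinj le_rfl) fun _ _ => rfl

end QEuler

open QEuler Polynomial

/-- Proposition: `inv3` is Mahonian.  For every `n ≥ 1`,
`∑_{σ ∈ S_n} t^{inv3(σ)} = [n]_t!` in `ℤ[t]`. -/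
theorem inv3_mahonian (n : ℕ) (hn : 1 ≤ n) :
    ∑ σ : Equiv.Perm (Fin n), (X : Polynomial ℤ) ^ inv3 n (ent σ)
      = ∏ m ∈ Finset.Icc 1 n, ∑ i ∈ Finset.range m, (X : Polynomial ℤ) ^ i := by
  induction n, hn using Nat.le_induction with
  | base =>
    have h : ∀ σ : Equiv.Perm (Fin 1), inv3 1 (ent σ) = 0 := by
      intro σ
      rw [inv3_succ]
      simp [inv3]
    simp [h]
  | succ n hn ih =>
    rw [← (insLast_bijective n).sum_comp
        fun σ => (X : Polynomial ℤ) ^ inv3 (n + 1) (ent σ),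
      Fintype.sum_prod_type_right, Finset.prod_Icc_succ_top (by omega), ← ih, Finset.sum_mul]
    refine Finset.sum_congr rfl fun τ _ => ?_
    have ha := Finset.mem_Icc.1 (ent_mem τ (i := n) (by simp [hn]))
    rw [← sum_lastCount n (ent τ n) ha.2 (ent τ (n - 1) < ent τ n), Finset.mul_sum]
    refine Finset.sum_congr rfl fun l _ => ?_
    have he : ent (insLast l τ) = etaEnt n (l + 1) (ent τ) := funext (ent_insLast l τ)
    rw [← pow_add, inv3_succ, card_lastPairs hn, he, inv3_etaEnt _ _ _ (by simp [ent])]
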